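/- Let R be a finite commutative ring and A ⊆ R a finite nonempty subset. Let E denote the number of pairs of triples ((x, y, z), (x', y', z')) with x, x' ∈ A + A and y, z, y', z' ∈ A such that (x − z)^2 + y^2 = (x' − z')^2 + y'^2. Then |A|^6 ≤ |A^2 + A^2| · E. -/

import Mathlib

open Finset Pointwise

/-!
For every `(a, y, z) ∈ A × A × A`, the triple `(a + z, y, z)` solves `(x - z)² + y² ∈ A² + A²`, so
this condition has at least `|A|³` solutions `(x, y, z) ∈ (A + A) × A × A`. By Cauchy–Schwarz over
the `|A² + A²|` values of `(x - z)² + y²`, these solutions must collide often.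
-/

section Collisions

variable {α β : Type*} [DecidableEq β]

/-- The collisions of `f` on `s`: the ordered pairs of elements of `s`, diagonal ones included, with
the same image under `f`. Their number is the energy of `f` on `s`. -/
def collisionPairs (f : α → β) (s : Finset α) : Finset (α × α) :=
  {p ∈ s ×ˢ s | f p.1 = f p.2}

theorem sum_card_fiber_sq_eq_card_collisionPairs_filter (f : α → β) (s : Finset α)
    (t : Finset β) :
    ∑ b ∈ t, #{a ∈ s | f a = b} ^ 2 = #{p ∈ collisionPairs f s | f p.1 ∈ t} := by
  rw [← sum_card_fiberwise_eq_card_filter]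
  refine sum_congr rfl fun b _ ↦ ?_
  rw [sq, ← card_product]
  congr 1
  ext ⟨a, a'⟩
  simp only [collisionPairs, mem_filter, mem_product]
  grind

theorem card_filter_mem_sq_le_card_mul_card_collisionPairs (f : α → β) (s : Finset α)
    (t : Finset β) :
    #{a ∈ s | f a ∈ t} ^ 2 ≤ #t * #(collisionPairs f s) :=
  calc
    #{a ∈ s | f a ∈ t} ^ 2 = (∑ b ∈ t, #{a ∈ s | f a = b}) ^ 2 := by
      rw [sum_card_fiberwise_eq_card_filter]
    _ ≤ #t * ∑ b ∈ t, #{a ∈ s | f a = b} ^ 2 := sq_sum_le_card_mul_sum_sq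
    _ = #t * #{p ∈ collisionPairs f s | f p.1 ∈ t} := by
      rw [sum_card_fiber_sq_eq_card_collisionPairs_filter]
    _ ≤ #t * #(collisionPairs f s) := by
      gcongr
      exact filter_subset _ _

end Collisions

section Translates

variable {G H : Type*} [AddGroup G] [DecidableEq G] [Add H] [DecidableEq H]

theorem card_mul_card_mul_card_le_card_filter_sub_add_mem (f g : G → H) (A B C : Finset G) :
    #A * #B * #C ≤
      #{p ∈ (A + C) ×ˢ B ×ˢ C | f (p.1 - p.2.2) + g p.2.1 ∈ A.image f + B.image g} := by
  rw [mul_assoc, ← card_product, ← card_product]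
  refine card_le_card_of_injOn (fun p ↦ (p.1 + p.2.2, p.2)) ?maps_to ?injective
  case maps_to =>
    rintro ⟨a, y, z⟩ h
    obtain ⟨ha, hy, hz⟩ : a ∈ A ∧ y ∈ B ∧ z ∈ C := by simpa using h
    simp only [coe_filter, mem_product, Set.mem_ofPred_eq, add_sub_cancel_right]
    exact ⟨⟨add_mem_add ha hz, hy, hz⟩,
      add_mem_add (mem_image_of_mem f ha) (mem_image_of_mem g hy)⟩
  case injective =>
    rintro ⟨a, y, z⟩ - ⟨a', y', z'⟩ - h
    simp only [Prod.mk.injEq] at h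
    obtain ⟨hx, rfl, rfl⟩ := h
    rw [add_right_cancel hx]

theorem card_mul_card_mul_card_sq_le_card_image_add_image_mul (f g : G → H) (A B C : Finset G) :
    (#A * #B * #C) ^ 2 ≤ #(A.image f + B.image g) *
      #(collisionPairs (fun p : G × G × G ↦ f (p.1 - p.2.2) + g p.2.1)
        ((A + C) ×ˢ B ×ˢ C)) :=
  (Nat.pow_le_pow_left (card_mul_card_mul_card_le_card_filter_sub_add_mem f g A B C) 2).trans
    (card_filter_mem_sq_le_card_mul_card_collisionPairs _ _ _)

end Translates

theorem stmt_10_general {R : Type*} [Ring R] [DecidableEq R] (A : Finset R) :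
    #A ^ 6 ≤ #(A.image (fun x ↦ x ^ 2) + A.image (fun x ↦ x ^ 2)) *
      #{t ∈ ((A + A) ×ˢ A ×ˢ A) ×ˢ ((A + A) ×ˢ A ×ˢ A) |
        (t.1.1 - t.1.2.2) ^ 2 + t.1.2.1 ^ 2 = (t.2.1 - t.2.2.2) ^ 2 + t.2.2.1 ^ 2} :=
  calc
    #A ^ 6 = (#A * #A * #A) ^ 2 := by ring
    _ ≤ _ := card_mul_card_mul_card_sq_le_card_image_add_image_mul (· ^ 2) (· ^ 2) A A A

/-- Let `R` be a finite commutative ring and `A ⊆ R` finite nonempty.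
Let `E` be the number of pairs of triples `((x,y,z), (x',y',z'))` with `x, x' ∈ A + A`
and `y, z, y', z' ∈ A` such that `(x−z)² + y² = (x'−z')² + y'²`. Then
`|A|⁶ ≤ |A² + A²| * E`. -/
theorem stmt_10 {R : Type*} [CommRing R] [Fintype R] [DecidableEq R]
    (A : Finset R) (hA : A.Nonempty) :
    A.card ^ 6 ≤
      (A.image (fun x => x ^ 2) + A.image (fun x => x ^ 2)).card *
        ((((A + A) ×ˢ A ×ˢ A) ×ˢ ((A + A) ×ˢ A ×ˢ A)).filter
          (fun t => (t.1.1 - t.1.2.2) ^ 2 + t.1.2.1 ^ 2 =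
            (t.2.1 - t.2.2.2) ^ 2 + t.2.2.1 ^ 2)).card :=
  stmt_10_general A
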